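/- arXiv:2506.17888 — 2 statements merged into one kernel-verified Lean document; each statement's English description precedes it below -/
import Mathlib

section
/- Let b > 0 and let a_g, a_f be real numbers with b/2 < a_g < a_f < b, and let p > q > 0 be constants. Let f and g assign to each closed interval [x,y] (x ≤ y in ℝ) a nonnegative real value, antitone under inclusion of intervals, such that f([x,y]) = p whenever [x,y] ⊆ (0, a_f), f([x,y]) = 0 whenever [x,y] ⊄ [0,b], g([x,y]) = q whenever [x,y] ⊆ (0, a_g), and g([x,y]) = 0 whenever [x,y] ⊄ [0,b]. Then d_E(f, g) ≥ a_f / 2. -/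
open scoped ENNReal

/-- An assignment of values to closed intervals `[x, y]` is antitone under inclusion of
intervals if larger intervals receive smaller values. -/
def IntervalAntitone (F : ∀ x y : ℝ, x ≤ y → ℝ) : Prop :=
  ∀ (x y x' y' : ℝ) (h : x ≤ y) (h' : x' ≤ y'),
    x' ≤ x → y ≤ y' → F x' y' h' ≤ F x y h

/-- Two interval-indexed invariants are `ε`-eroded if each dominates the other after
thickening intervals by `ε`. -/
def Eroded (F₁ F₂ : ∀ x y : ℝ, x ≤ y → ℝ) (ε : ℝ) : Prop :=
  0 ≤ ε ∧ ∀ (x y : ℝ) (hxy : x ≤ y) (hxy' : x - ε ≤ y + ε),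
    F₂ (x - ε) (y + ε) hxy' ≤ F₁ x y hxy ∧ F₁ (x - ε) (y + ε) hxy' ≤ F₂ x y hxy

/-- The erosion distance: the infimum of all `ε ≥ 0` such that the two invariants are
`ε`-eroded (`∞` if none exists). -/
noncomputable def erosionDist (F₁ F₂ : ∀ x y : ℝ, x ≤ y → ℝ) : ℝ≥0∞ :=
  sInf {e : ℝ≥0∞ | ∃ ε : ℝ, e = ENNReal.ofReal ε ∧ Eroded F₁ F₂ ε}

/-!
If `f` and `g` are `ε`-eroded, then thickening the degenerate interval at the midpoint `a_f / 2` of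
`(0, a_f)` gives `f [a_f / 2 - ε, a_f / 2 + ε] ≤ g [a_f / 2, a_f / 2]`. For `ε < a_f / 2` the
thickened interval still lies in `(0, a_f)`, where `f = p`, while `a_f / 2 < b / 2 < a_g` puts the
midpoint in `(0, a_g)`, where `g = q < p`.
-/

theorem ofReal_le_erosionDist_iff {F₁ F₂ : ∀ x y : ℝ, x ≤ y → ℝ} {r : ℝ} :
    ENNReal.ofReal r ≤ erosionDist F₁ F₂ ↔ ∀ ε, Eroded F₁ F₂ ε → r ≤ ε := by
  constructor
  · intro hr ε hε
    exact (ENNReal.ofReal_le_ofReal_iff hε.1).1 (hr.trans (sInf_le ⟨ε, rfl, hε⟩))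
  · intro hr
    refine le_sInf ?_
    rintro _ ⟨ε, rfl, hε⟩
    exact ENNReal.ofReal_le_ofReal (hr ε hε)

theorem ofReal_le_erosionDist_of_lt_thickening {F₁ F₂ : ∀ x y : ℝ, x ≤ y → ℝ} {r x y : ℝ}
    (hxy : x ≤ y)
    (hlt : ∀ ε, 0 ≤ ε → ε < r → ∀ h : x - ε ≤ y + ε, F₂ x y hxy < F₁ (x - ε) (y + ε) h) :
    ENNReal.ofReal r ≤ erosionDist F₁ F₂ := by
  refine ofReal_le_erosionDist_iff.2 fun ε ⟨hε, herode⟩ => ?_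
  by_contra! hεr
  have hthick : x - ε ≤ y + ε := by linarith
  exact (hlt ε hε hεr hthick).not_ge (herode x y hxy hthick).2

theorem erosionDist_ge_general {a_f a_g p q : ℝ} (ha : a_f / 2 < a_g) (hpq : q < p)
    {f g : ∀ x y : ℝ, x ≤ y → ℝ}
    (hf : ∀ (x y : ℝ) (h : x ≤ y), 0 < x → y < a_f → p ≤ f x y h)
    (hg : ∀ (x y : ℝ) (h : x ≤ y), 0 < x → y < a_g → g x y h ≤ q) :
    ENNReal.ofReal (a_f / 2) ≤ erosionDist f g := by
  refine ofReal_le_erosionDist_of_lt_thickening (le_refl (a_f / 2)) fun ε hε hεa hthick => ?_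
  calc g (a_f / 2) (a_f / 2) le_rfl
      ≤ q := hg _ _ _ (hε.trans_lt hεa) ha
    _ < p := hpq
    _ ≤ f (a_f / 2 - ε) (a_f / 2 + ε) hthick := hf _ _ _ (by linarith) (by linarith)

/-- Lower bound for the erosion distance between two interval-indexed invariants of the
shape described in the paper: `d_E(f, g) ≥ a_f / 2`. -/
theorem erosionDist_ge
    (b a_g a_f p q : ℝ) (hb : 0 < b) (h₁ : b / 2 < a_g) (h₂ : a_g < a_f) (h₃ : a_f < b)
    (hq : 0 < q) (hpq : q < p)
    (f g : ∀ x y : ℝ, x ≤ y → ℝ)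
    (hf_nonneg : ∀ (x y : ℝ) (h : x ≤ y), 0 ≤ f x y h)
    (hg_nonneg : ∀ (x y : ℝ) (h : x ≤ y), 0 ≤ g x y h)
    (hf_anti : IntervalAntitone f) (hg_anti : IntervalAntitone g)
    (hf_p : ∀ (x y : ℝ) (h : x ≤ y), 0 < x → y < a_f → f x y h = p)
    (hf_0 : ∀ (x y : ℝ) (h : x ≤ y), ¬(0 ≤ x ∧ y ≤ b) → f x y h = 0)
    (hg_q : ∀ (x y : ℝ) (h : x ≤ y), 0 < x → y < a_g → g x y h = q)
    (hg_0 : ∀ (x y : ℝ) (h : x ≤ y), ¬(0 ≤ x ∧ y ≤ b) → g x y h = 0) :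
    ENNReal.ofReal (a_f / 2) ≤ erosionDist f g := by
  exact erosionDist_ge_general (by linarith) hpq
    (fun x y h hx hy => (hf_p x y h hx hy).ge) (fun x y h hx hy => (hg_q x y h hx hy).le)
end

section
/- Let b > 0 and let a_g, a_f be real numbers with b/2 < a_g < a_f < b, and let p > q > 0 be constants. Let f and g assign to each closed interval [x,y] (x ≤ y in ℝ) a nonnegative real value, antitone under inclusion of intervals, such that f([x,y]) = p whenever [x,y] ⊆ (0, a_f), f([x,y]) = 0 whenever [x,y] ⊄ [0,b], g([x,y]) = q whenever [x,y] ⊆ (0, a_g), and g([x,y]) = 0 whenever [x,y] ⊄ [0,b]. Assume in addition that f([x,y]) = 0 whenever y − x > a_f and g([x,y]) = 0 whenever y − x > a_g. Then d_E(f, g) = a_f / 2. -/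
open scoped ENNReal

/-! Thickening by any `ε > a_f / 2` produces intervals of length greater than `a_f`, on which both
invariants vanish, so erosion holds trivially. Conversely, `[a_f / 2, a_f / 2]` lies in `(0, a_g)`,
while its thickening by any `ε < a_f / 2` stays in `(0, a_f)`; there `f` takes the value `p`, which
exceeds the value `q` of `g` at the midpoint. -/

section ErosionDistance

variable {F₁ F₂ : ∀ x y : ℝ, x ≤ y → ℝ} {δ ε : ℝ}

theorem erosionDist_le_ofReal (h : ∀ ε, 0 < ε → δ < ε → Eroded F₁ F₂ ε) :
    erosionDist F₁ F₂ ≤ ENNReal.ofReal δ := by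
  refine le_of_forall_gt_imp_ge_of_dense fun e he => ?_
  obtain rfl | htop := eq_or_ne e ∞
  · exact le_top
  rw [← ENNReal.ofReal_toReal htop] at he
  obtain ⟨hδe, he_pos⟩ := ENNReal.ofReal_lt_ofReal_iff'.1 he
  exact sInf_le ⟨e.toReal, (ENNReal.ofReal_toReal htop).symm, h _ he_pos hδe⟩

theorem ofReal_le_erosionDist (h : ∀ ε, Eroded F₁ F₂ ε → δ ≤ ε) :
    ENNReal.ofReal δ ≤ erosionDist F₁ F₂ := by
  refine le_sInf ?_
  rintro _ ⟨ε, rfl, hε⟩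
  exact ENNReal.ofReal_le_ofReal (h ε hε)

theorem eroded_of_nonneg_of_eq_zero (hε : 0 ≤ ε)
    (nonneg₁ : ∀ (x y : ℝ) (h : x ≤ y), 0 ≤ F₁ x y h)
    (nonneg₂ : ∀ (x y : ℝ) (h : x ≤ y), 0 ≤ F₂ x y h)
    (zero₁ : ∀ (x y : ℝ) (h : x ≤ y), 2 * ε ≤ y - x → F₁ x y h = 0)
    (zero₂ : ∀ (x y : ℝ) (h : x ≤ y), 2 * ε ≤ y - x → F₂ x y h = 0) :
    Eroded F₁ F₂ ε := by
  refine ⟨hε, fun x y hxy hxy' => ?_⟩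
  have hlen : 2 * ε ≤ (y + ε) - (x - ε) := by linarith
  exact ⟨(zero₂ _ _ hxy' hlen).trans_le (nonneg₁ x y hxy),
    (zero₁ _ _ hxy' hlen).trans_le (nonneg₂ x y hxy)⟩

theorem Eroded.le_of_forall_lt {x y : ℝ} {hxy : x ≤ y} (hE : Eroded F₁ F₂ ε)
    (hlt : ∀ r, 0 ≤ r → r < δ → ∀ h : x - r ≤ y + r, F₂ x y hxy < F₁ (x - r) (y + r) h) :
    δ ≤ ε := by
  obtain ⟨hε, her⟩ := hE
  by_contra! hεδ
  have hxy' : x - ε ≤ y + ε := by linarith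
  exact (her x y hxy hxy').2.not_gt (hlt ε hε hεδ hxy')

end ErosionDistance

theorem erosionDist_eq_general
    {a_g a_f p q : ℝ} (ha_pos : 0 < a_f) (ha : a_f / 2 < a_g) (hpq : q < p)
    {f g : ∀ x y : ℝ, x ≤ y → ℝ}
    (hf_nonneg : ∀ (x y : ℝ) (h : x ≤ y), 0 ≤ f x y h)
    (hg_nonneg : ∀ (x y : ℝ) (h : x ≤ y), 0 ≤ g x y h)
    (hf_p : ∀ (x y : ℝ) (h : x ≤ y), 0 < x → y < a_f → f x y h = p)
    (hg_q : ∀ (x y : ℝ) (h : x ≤ y), 0 < x → y < a_g → g x y h = q)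
    (hf_len : ∀ (x y : ℝ) (h : x ≤ y), a_f < y - x → f x y h = 0)
    (hg_len : ∀ (x y : ℝ) (h : x ≤ y), a_f < y - x → g x y h = 0) :
    erosionDist f g = ENNReal.ofReal (a_f / 2) := by
  apply le_antisymm
  · refine erosionDist_le_ofReal fun ε hε hlt => ?_
    exact eroded_of_nonneg_of_eq_zero hε.le hf_nonneg hg_nonneg
      (fun x y h hlen => hf_len x y h (by linarith))
      (fun x y h hlen => hg_len x y h (by linarith))
  · refine ofReal_le_erosionDist fun ε hE =>
      hE.le_of_forall_lt (hxy := le_refl (a_f / 2)) fun r _ hlt h => ?_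
    have hg_mid : g (a_f / 2) (a_f / 2) le_rfl = q := hg_q _ _ _ (half_pos ha_pos) ha
    have hf_thick : f (a_f / 2 - r) (a_f / 2 + r) h = p := hf_p _ _ _ (by linarith) (by linarith)
    rwa [hg_mid, hf_thick]

/-- Exact value of the erosion distance between two interval-indexed invariants of the
shape described in the paper, assuming in addition that `f` (resp. `g`) vanishes on
intervals of length greater than `a_f` (resp. `a_g`): `d_E(f, g) = a_f / 2`. -/
theorem erosionDist_eq
    (b a_g a_f p q : ℝ) (hb : 0 < b) (h₁ : b / 2 < a_g) (h₂ : a_g < a_f) (h₃ : a_f < b)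
    (hq : 0 < q) (hpq : q < p)
    (f g : ∀ x y : ℝ, x ≤ y → ℝ)
    (hf_nonneg : ∀ (x y : ℝ) (h : x ≤ y), 0 ≤ f x y h)
    (hg_nonneg : ∀ (x y : ℝ) (h : x ≤ y), 0 ≤ g x y h)
    (hf_anti : IntervalAntitone f) (hg_anti : IntervalAntitone g)
    (hf_p : ∀ (x y : ℝ) (h : x ≤ y), 0 < x → y < a_f → f x y h = p)
    (hf_0 : ∀ (x y : ℝ) (h : x ≤ y), ¬(0 ≤ x ∧ y ≤ b) → f x y h = 0)
    (hg_q : ∀ (x y : ℝ) (h : x ≤ y), 0 < x → y < a_g → g x y h = q)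
    (hg_0 : ∀ (x y : ℝ) (h : x ≤ y), ¬(0 ≤ x ∧ y ≤ b) → g x y h = 0)
    (hf_len : ∀ (x y : ℝ) (h : x ≤ y), a_f < y - x → f x y h = 0)
    (hg_len : ∀ (x y : ℝ) (h : x ≤ y), a_g < y - x → g x y h = 0) :
    erosionDist f g = ENNReal.ofReal (a_f / 2) :=
  erosionDist_eq_general (by linarith) (by linarith) hpq hf_nonneg hg_nonneg hf_p hg_q
    hf_len fun x y h hlen => hg_len x y h (h₂.trans hlen)
end
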